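/- Let Γ be a finite simplicial graph which is connected and anti-connected, and let A_Γ be its right-angled Artin group. There exists a total computable function which, given a word w over the alphabet V(Γ)^{±1}, outputs the star length |g|_* of the element g of A_Γ represented by w. -/

import Mathlib

/-!
The star length of the element `g` represented by a word `w` is found by a bounded search whose
individual tests are decided by a solution of the word problem in `A_Γ`.

**Word problem.** Words are reduced by inserting their letters one at a time from the right
(`push`): a letter `a` is put in front of a word unless the word contains an `a⁻¹` preceded only by
letters adjacent to `a`, in which case that `a⁻¹` is deleted. Modulo exchanges of adjacent commuting
letters (`Shuffle`), the operations `push a` on reduced words satisfy the defining relations of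
`A_Γ` and are invertible (`push_comm`, `push_push_inv`), so `A_Γ` acts on the classes of reduced
words. The orbit of the empty word shows that `g` determines the reduction of any of its words up to
`Shuffle`. Hence a word represents `1` iff it reduces to the empty word (`wordProd_eq_iff`), and
reduced words are geodesic (`Reduced.length_le`).

**Bounding the search.** A factorization of `g` into `l` elements of star subgroups is the same as a
concatenation of `l` star-blocks representing `g`. If this concatenation is not reduced, two letters
can be deleted, and what remains is still a concatenation of `l` star-blocks. After finitely many
deletions the word is reduced, hence no longer than `w` (`exists_short_blocks`). So only the finitely
many lists of star-blocks of length at most `|w|` matter; enumerating them and comparing with `w` is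
primitive recursive (`primrecRel_hasBlocks`), and unbounded minimization over `l` ends because each
letter of `w` is itself a star-block.
-/

/-- The commutation relators of the right-angled Artin group of the graph `Γ`. -/
def raagRels {V : Type*} (Γ : SimpleGraph V) : Set (FreeGroup V) :=
  {r | ∃ v w : V, Γ.Adj v w ∧
    r = FreeGroup.of v * FreeGroup.of w * (FreeGroup.of v)⁻¹ * (FreeGroup.of w)⁻¹}

/-- The right-angled Artin group `A_Γ` of the graph `Γ`. -/
abbrev RAAG {V : Type*} (Γ : SimpleGraph V) := PresentedGroup (raagRels Γ)

/-- The element of `A_Γ` represented by a word over the alphabet `V(Γ)^{±1}`;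
a letter `(v, true)` stands for the generator `v` and `(v, false)` for its inverse. -/
def wordProd {V : Type*} (Γ : SimpleGraph V) (w : List (V × Bool)) : RAAG Γ :=
  (w.map fun p => if p.2 then (PresentedGroup.of p.1 : RAAG Γ)
    else (PresentedGroup.of p.1 : RAAG Γ)⁻¹).prod

/-- The standard generating set `V(Γ)^{±1}` of `A_Γ`. -/
def raagGens {V : Type*} (Γ : SimpleGraph V) : Set (RAAG Γ) :=
  {g | ∃ v : V, g = PresentedGroup.of v ∨ g = (PresentedGroup.of v : RAAG Γ)⁻¹}

/-- The graph `Γ` decomposes as a nontrivial join: its vertex set splits into two nonempty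
parts, every vertex of one part adjacent to every vertex of the other, and the two parts
are not both singletons. -/
def IsNontrivialJoin {V : Type*} (Γ : SimpleGraph V) : Prop :=
  ∃ A B : Set V, A.Nonempty ∧ B.Nonempty ∧ Disjoint A B ∧ A ∪ B = Set.univ ∧
    (∀ a ∈ A, ∀ b ∈ B, Γ.Adj a b) ∧ ¬ ∃ a b, A = {a} ∧ B = {b}

/-- The graph `Γ` is anti-connected: it does not decompose as a nontrivial join. -/
def AntiConnected {V : Type*} (Γ : SimpleGraph V) : Prop := ¬ IsNontrivialJoin Γ

/-- The star of the vertex `v` in the graph `Γ`: `v` together with its neighbors. -/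
def vertexStar {V : Type*} (Γ : SimpleGraph V) (v : V) : Set V :=
  insert v {u | Γ.Adj v u}

/-- The subgroup `⟨St(v)⟩` of `A_Γ` generated by the star of the vertex `v`. -/
def starSubgroup {V : Type*} (Γ : SimpleGraph V) (v : V) : Subgroup (RAAG Γ) :=
  Subgroup.closure (PresentedGroup.of '' vertexStar Γ v)

/-- The star length `|g|_*` of an element `g` of `A_Γ`: the least `l` such that `g` is a
product of `l` elements of `⋃_{v ∈ V(Γ)} ⟨St(v)⟩`. -/
noncomputable def starLength {V : Type*} (Γ : SimpleGraph V) (g : RAAG Γ) : ℕ :=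
  sInf {l : ℕ | ∃ factors : List (RAAG Γ), factors.length = l ∧
    (∀ x ∈ factors, ∃ v : V, x ∈ starSubgroup Γ v) ∧ factors.prod = g}

/-- A word over `V(Γ)^{±1}` is a star-block if all its letters lie in the star of a single
vertex. -/
def IsStarBlock {V : Type*} (Γ : SimpleGraph V) (w : List (V × Bool)) : Prop :=
  ∃ v : V, ∀ p ∈ w, p.1 ∈ vertexStar Γ v

/-- A word over `V(Γ)^{±1}` is in normal form for `A_Γ` if it is freely reduced and contains
no subword `x^ε u x^{-ε}` where `x` commutes in `A_Γ` with every letter of `u` (the case of an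
empty `u` expresses free reducedness). -/
def IsNormalForm {V : Type*} (Γ : SimpleGraph V) (w : List (V × Bool)) : Prop :=
  ¬ ∃ (p u s : List (V × Bool)) (x : V) (ε : Bool),
      w = p ++ (x, ε) :: (u ++ (x, !ε) :: s) ∧
      ∀ q ∈ u, x = q.1 ∨ Γ.Adj x q.1

section Letters

variable {V : Type*}

/-- The inverse letter. -/
def invLetter (a : V × Bool) : V × Bool := (a.1, !a.2)

@[simp] theorem invLetter_invLetter (a : V × Bool) : invLetter (invLetter a) = a := by
  simp [invLetter]

@[simp] theorem invLetter_fst (a : V × Bool) : (invLetter a).1 = a.1 := rfl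

/-- The element of `A_Γ` represented by a single letter. -/
def letterVal (Γ : SimpleGraph V) (p : V × Bool) : RAAG Γ :=
  if p.2 then (PresentedGroup.of p.1 : RAAG Γ) else (PresentedGroup.of p.1 : RAAG Γ)⁻¹

variable (Γ : SimpleGraph V)

@[simp] theorem wordProd_nil : wordProd Γ [] = 1 := rfl

@[simp] theorem wordProd_cons (a : V × Bool) (w : List (V × Bool)) :
    wordProd Γ (a :: w) = letterVal Γ a * wordProd Γ w := by
  simp [wordProd, letterVal]

@[simp] theorem wordProd_append (u w : List (V × Bool)) :
    wordProd Γ (u ++ w) = wordProd Γ u * wordProd Γ w := by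
  simp [wordProd]

theorem wordProd_flatten (bs : List (List (V × Bool))) :
    wordProd Γ bs.flatten = (bs.map (wordProd Γ)).prod := by
  induction bs with
  | nil => rfl
  | cons b bs ih => simp [ih]

@[simp] theorem letterVal_invLetter (a : V × Bool) :
    letterVal Γ (invLetter a) = (letterVal Γ a)⁻¹ := by
  rcases a with ⟨v, _ | _⟩ <;> simp [letterVal, invLetter]

theorem wordProd_invWord (w : List (V × Bool)) :
    wordProd Γ (w.map invLetter).reverse = (wordProd Γ w)⁻¹ := by
  induction w with
  | nil => simp
  | cons a w ih => simp [ih]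

theorem of_commute {x y : V} (h : Γ.Adj x y) :
    Commute (PresentedGroup.of x : RAAG Γ) (PresentedGroup.of y) := by
  have h1 : (PresentedGroup.mk (raagRels Γ)) (FreeGroup.of x * FreeGroup.of y *
      (FreeGroup.of x)⁻¹ * (FreeGroup.of y)⁻¹) = 1 :=
    PresentedGroup.one_of_mem ⟨x, y, h, rfl⟩
  simp only [map_mul, map_inv] at h1
  rw [mul_inv_eq_one, mul_inv_eq_iff_eq_mul] at h1
  exact h1

theorem letterVal_commute {a b : V × Bool} (h : Γ.Adj a.1 b.1) :
    Commute (letterVal Γ a) (letterVal Γ b) := by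
  have := of_commute Γ h
  unfold letterVal
  split_ifs <;> simp [this]

end Letters

/-! ### Shuffle equivalence and reduced words -/

section Reduction

variable {V : Type*} (Γ : SimpleGraph V)

/-- Shuffle equivalence of words: the congruence generated by exchanging two consecutive letters
whose vertices are adjacent in `Γ`. -/
inductive Shuffle : List (V × Bool) → List (V × Bool) → Prop
  | nil : Shuffle [] []
  | cons (a : V × Bool) {u v : List (V × Bool)} : Shuffle u v → Shuffle (a :: u) (a :: v)
  | swap (a b : V × Bool) (w : List (V × Bool)) :
      Γ.Adj a.1 b.1 → Shuffle (a :: b :: w) (b :: a :: w)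
  | trans {u v w : List (V × Bool)} : Shuffle u v → Shuffle v w → Shuffle u w

variable {Γ}

theorem Shuffle.refl : ∀ w : List (V × Bool), Shuffle Γ w w
  | [] => .nil
  | a :: w => .cons a (Shuffle.refl w)

theorem Shuffle.symm {u v : List (V × Bool)} (h : Shuffle Γ u v) : Shuffle Γ v u := by
  induction h with
  | nil => exact .nil
  | cons a _ ih => exact .cons a ih
  | swap a b w h => exact .swap b a w h.symm
  | trans _ _ ih₁ ih₂ => exact ih₂.trans ih₁

theorem Shuffle.length_eq {u v : List (V × Bool)} (h : Shuffle Γ u v) : u.length = v.length := by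
  induction h with
  | nil => rfl
  | cons a _ ih => simp [ih]
  | swap => simp
  | trans _ _ ih₁ ih₂ => exact ih₁.trans ih₂

variable (Γ) [DecidableEq V] [DecidableRel Γ.Adj]

/-- Cancellation of the letter `a` against a word: if the first occurrence of `a⁻¹` in the word is
preceded only by letters adjacent to `a`, that occurrence is deleted; otherwise the result is
`none`. -/
def cancel (a : V × Bool) : List (V × Bool) → Option (List (V × Bool))
  | [] => none
  | b :: w =>
    if b = invLetter a then some w
    else if Γ.Adj a.1 b.1 then (cancel a w).map (b :: ·) else none

/-- Left multiplication of a word by the letter `a`, performing a cancellation if possible. -/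
def push (a : V × Bool) (w : List (V × Bool)) : List (V × Bool) :=
  (cancel Γ a w).getD (a :: w)

/-- The reduction of a word, obtained by pushing its letters one at a time from the right. -/
def reduce (w : List (V × Bool)) : List (V × Bool) := w.foldr (push Γ) []

/-- A word is reduced if no letter can be cancelled against the part of the word following it. -/
def Reduced : List (V × Bool) → Prop
  | [] => True
  | a :: w => cancel Γ a w = none ∧ Reduced w

variable {Γ}

theorem cancel_cons_self (a : V × Bool) (w : List (V × Bool)) :
    cancel Γ a (invLetter a :: w) = some w := by simp [cancel]

theorem cancel_cons_adj {a b : V × Bool} (h : Γ.Adj a.1 b.1) (w : List (V × Bool)) :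
    cancel Γ a (b :: w) = (cancel Γ a w).map (b :: ·) := by
  have : b ≠ invLetter a := by
    rintro rfl
    exact Γ.loopless.irrefl _ h
  simp [cancel, this, h]

theorem cancel_shuffle {a : V × Bool} {w w' : List (V × Bool)} (h : cancel Γ a w = some w') :
    Shuffle Γ w (invLetter a :: w') := by
  induction w generalizing w' with
  | nil => simp [cancel] at h
  | cons b w ih =>
    simp only [cancel] at h
    split_ifs at h with h1 h2
    · cases h
      rw [h1]
      exact .refl _
    · obtain ⟨u, hu, rfl⟩ := Option.map_eq_some_iff.1 h
      exact (Shuffle.cons b (ih hu)).trans (.swap _ _ _ h2.symm)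

/-- Cancellation is compatible with shuffle equivalence. -/
theorem cancel_congr {u v : List (V × Bool)} (h : Shuffle Γ u v) (a : V × Bool) :
    ∀ u', cancel Γ a u = some u' → ∃ v', cancel Γ a v = some v' ∧ Shuffle Γ u' v' := by
  induction h with
  | nil => simp [cancel]
  | @cons b u v h ih =>
    intro u' hu
    simp only [cancel] at hu ⊢
    split_ifs at hu ⊢ with h1 h2
    · cases hu
      exact ⟨_, rfl, h⟩
    · obtain ⟨x, hx, rfl⟩ := Option.map_eq_some_iff.1 hu
      obtain ⟨y, hy, hxy⟩ := ih x hx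
      exact ⟨b :: y, by simp [hy], .cons b hxy⟩
  | swap b c w h =>
    intro u' hu
    by_cases h1 : b = invLetter a
    · subst h1
      rw [cancel_cons_self] at hu
      cases hu
      refine ⟨c :: w, ?_, .refl _⟩
      rw [cancel_cons_adj (by simpa using h), cancel_cons_self]
      rfl
    · by_cases h2 : c = invLetter a
      · subst h2
        rw [cancel_cons_adj (by simpa using h.symm), cancel_cons_self] at hu
        cases hu
        exact ⟨b :: w, cancel_cons_self _ _, .refl _⟩
      · simp only [cancel, h1, h2, if_false] at hu ⊢
        split_ifs at hu ⊢ with h3 h4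
        · obtain ⟨x, hx, rfl⟩ := Option.map_eq_some_iff.1 hu
          obtain ⟨y, hy, rfl⟩ := Option.map_eq_some_iff.1 hx
          exact ⟨c :: b :: y, by simp [hy], .swap b c y h⟩
        all_goals simp at hu
  | trans _ _ ih₁ ih₂ =>
    intro u' hu
    obtain ⟨x, hx, hux⟩ := ih₁ u' hu
    obtain ⟨y, hy, hxy⟩ := ih₂ x hx
    exact ⟨y, hy, hux.trans hxy⟩

theorem cancel_eq_none_congr {u v : List (V × Bool)} (h : Shuffle Γ u v) {a : V × Bool}
    (hu : cancel Γ a u = none) : cancel Γ a v = none := by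
  by_contra hv
  obtain ⟨v', hv'⟩ := Option.ne_none_iff_exists'.1 hv
  obtain ⟨u', hu', -⟩ := cancel_congr h.symm a v' hv'
  simp [hu] at hu'

theorem push_of_none {a : V × Bool} {w : List (V × Bool)} (h : cancel Γ a w = none) :
    push Γ a w = a :: w := by simp [push, h]

theorem push_of_some {a : V × Bool} {w w' : List (V × Bool)} (h : cancel Γ a w = some w') :
    push Γ a w = w' := by simp [push, h]

theorem push_congr {u v : List (V × Bool)} (h : Shuffle Γ u v) (a : V × Bool) :
    Shuffle Γ (push Γ a u) (push Γ a v) := by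
  cases hu : cancel Γ a u with
  | none =>
    rw [push_of_none hu, push_of_none (cancel_eq_none_congr h hu)]
    exact .cons a h
  | some u' =>
    obtain ⟨v', hv, huv⟩ := cancel_congr h a u' hu
    rwa [push_of_some hu, push_of_some hv]

theorem Reduced.congr {u v : List (V × Bool)} (h : Shuffle Γ u v) (hu : Reduced Γ u) :
    Reduced Γ v := by
  induction h with
  | nil => trivial
  | cons a h ih => exact ⟨cancel_eq_none_congr h hu.1, ih hu.2⟩
  | swap a b w h =>
    obtain ⟨h1, h2, h3⟩ := hu
    rw [cancel_cons_adj h, Option.map_eq_none_iff] at h1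
    refine ⟨?_, h1, h3⟩
    rw [cancel_cons_adj h.symm, h2]
    rfl
  | trans _ _ ih₁ ih₂ => exact ih₂ (ih₁ hu)

theorem Reduced.push {w : List (V × Bool)} (hw : Reduced Γ w) (a : V × Bool) :
    Reduced Γ (push Γ a w) := by
  cases h : cancel Γ a w with
  | none =>
    rw [push_of_none h]
    exact ⟨h, hw⟩
  | some w' =>
    rw [push_of_some h]
    exact (hw.congr (cancel_shuffle h)).2

theorem Reduced.reduce (w : List (V × Bool)) : Reduced Γ (reduce Γ w) := by
  induction w with
  | nil => trivial
  | cons a w ih => exact ih.push a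

theorem Reduced.reduce_eq {w : List (V × Bool)} (hw : Reduced Γ w) : _root_.reduce Γ w = w := by
  induction w with
  | nil => rfl
  | cons a w ih =>
    change _root_.push Γ a (_root_.reduce Γ w) = _
    rw [ih hw.2, push_of_none hw.1]

theorem push_push_inv {w : List (V × Bool)} (hw : Reduced Γ w) (a : V × Bool) :
    Shuffle Γ (push Γ (invLetter a) (push Γ a w)) w := by
  cases h : cancel Γ a w with
  | none =>
    rw [push_of_none h]
    have : cancel Γ (invLetter a) (a :: w) = some w := by
      simpa using cancel_cons_self (Γ := Γ) (invLetter a) w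
    rw [push_of_some this]
    exact .refl _
  | some w' =>
    have h1 := cancel_shuffle h
    rw [push_of_some h, push_of_none (hw.congr h1).1]
    exact h1.symm

theorem push_comm_aux {a b : V × Bool} (h : Γ.Adj a.1 b.1) {w w' : List (V × Bool)}
    (ha : cancel Γ a w = some w') (hb : cancel Γ b w = none) :
    push Γ a (push Γ b w) = push Γ b (push Γ a w) := by
  have h1 := cancel_eq_none_congr (cancel_shuffle ha) hb
  rw [cancel_cons_adj (by simpa using h.symm), Option.map_eq_none_iff] at h1
  have h2 : cancel Γ a (b :: w) = some (b :: w') := by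
    rw [cancel_cons_adj h, ha]
    rfl
  rw [push_of_none hb, push_of_some ha, push_of_some h2, push_of_none h1]

theorem push_comm {a b : V × Bool} (h : Γ.Adj a.1 b.1) (w : List (V × Bool)) :
    Shuffle Γ (push Γ a (push Γ b w)) (push Γ b (push Γ a w)) := by
  cases ha : cancel Γ a w with
  | none =>
    cases hb : cancel Γ b w with
    | none =>
      have h1 : cancel Γ a (b :: w) = none := by
        rw [cancel_cons_adj h, ha]
        rfl
      have h2 : cancel Γ b (a :: w) = none := by
        rw [cancel_cons_adj h.symm, hb]
        rfl
      rw [push_of_none ha, push_of_none hb, push_of_none h1, push_of_none h2]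
      exact .swap a b w h
    | some w₂ =>
      rw [push_comm_aux h.symm hb ha]
      exact .refl _
  | some w₁ =>
    cases hb : cancel Γ b w with
    | none =>
      rw [push_comm_aux h ha hb]
      exact .refl _
    | some w₂ =>
      -- Both cancellations happen, in either order, and leave a common word `w₃`.
      obtain ⟨x, hx, hx'⟩ := cancel_congr (cancel_shuffle hb) a w₁ ha
      rw [cancel_cons_adj (by simpa using h)] at hx
      obtain ⟨w₃, hw₃, rfl⟩ := Option.map_eq_some_iff.1 hx
      obtain ⟨y, hy, hy'⟩ := cancel_congr hx'.symm b w₃ (cancel_cons_self _ _)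
      rwa [push_of_some ha, push_of_some hb, push_of_some hw₃, push_of_some hy]

/-! ### The word problem -/

omit [DecidableEq V] [DecidableRel Γ.Adj] in
theorem wordProd_congr {u v : List (V × Bool)} (h : Shuffle Γ u v) :
    wordProd Γ u = wordProd Γ v := by
  induction h with
  | nil => rfl
  | cons a _ ih => simp [ih]
  | swap a b w h => simp only [wordProd_cons, ← mul_assoc, (letterVal_commute Γ h).eq]
  | trans _ _ ih₁ ih₂ => exact ih₁.trans ih₂

theorem wordProd_push (a : V × Bool) (w : List (V × Bool)) :
    wordProd Γ (push Γ a w) = letterVal Γ a * wordProd Γ w := by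
  cases h : cancel Γ a w with
  | none => rw [push_of_none h, wordProd_cons]
  | some w' => rw [push_of_some h, wordProd_congr (cancel_shuffle h)]; simp

theorem wordProd_reduce (w : List (V × Bool)) : wordProd Γ (reduce Γ w) = wordProd Γ w := by
  induction w with
  | nil => rfl
  | cons a w ih =>
    change wordProd Γ (push Γ a (reduce Γ w)) = _
    rw [wordProd_push, ih, wordProd_cons]

variable (Γ)

/-- Shuffle equivalence as a setoid on reduced words. -/
def reducedSetoid : Setoid {w : List (V × Bool) // Reduced Γ w} where
  r u v := Shuffle Γ u.1 v.1
  iseqv := ⟨fun u => .refl u.1, fun h => h.symm, fun h h' => h.trans h'⟩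

/-- The set of reduced words up to shuffle equivalence; `A_Γ` acts on it by `push`. -/
abbrev ReducedClass := Quotient (reducedSetoid Γ)

/-- The action of a letter on classes of reduced words. -/
def pushClass (a : V × Bool) : ReducedClass Γ → ReducedClass Γ :=
  Quotient.map' (s₁ := reducedSetoid Γ) (s₂ := reducedSetoid Γ)
    (fun w => ⟨push Γ a w.1, w.2.push a⟩) fun _ _ h => push_congr h a

theorem pushClass_inv (a : V × Bool) (q : ReducedClass Γ) :
    pushClass Γ (invLetter a) (pushClass Γ a q) = q := by
  induction q using Quotient.inductionOn with
  | h w => exact Quotient.sound (push_push_inv w.2 a)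

theorem pushClass_comm {a b : V × Bool} (h : Γ.Adj a.1 b.1) (q : ReducedClass Γ) :
    pushClass Γ a (pushClass Γ b q) = pushClass Γ b (pushClass Γ a q) := by
  induction q using Quotient.inductionOn with
  | h w => exact Quotient.sound (push_comm h w.1)

/-- The permutation of classes of reduced words given by a generator of `A_Γ`. -/
def pushPerm (v : V) : Equiv.Perm (ReducedClass Γ) where
  toFun := pushClass Γ (v, true)
  invFun := pushClass Γ (v, false)
  left_inv := pushClass_inv Γ (v, true)
  right_inv := pushClass_inv Γ (v, false)

/-- The action of `A_Γ` on classes of reduced words. -/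
def pushHom : RAAG Γ →* Equiv.Perm (ReducedClass Γ) :=
  PresentedGroup.toGroup (f := pushPerm Γ) <| by
    rintro _ ⟨v, w, h, rfl⟩
    simp only [map_mul, map_inv, FreeGroup.lift_apply_of]
    rw [mul_inv_eq_one, mul_inv_eq_iff_eq_mul]
    ext q
    exact pushClass_comm Γ (a := (v, true)) (b := (w, true)) h q

theorem pushHom_letterVal (a : V × Bool) (q : ReducedClass Γ) :
    pushHom Γ (letterVal Γ a) q = pushClass Γ a q := by
  rcases a with ⟨v, _ | _⟩
  · simp only [letterVal, pushHom, map_inv, PresentedGroup.toGroup.of, Bool.false_eq_true,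
      if_false]
    rfl
  · simp only [letterVal, pushHom, PresentedGroup.toGroup.of, if_true]
    rfl

/-- The orbit map at the empty word sends the element represented by `w` to the class of
`reduce w`. -/
theorem pushHom_wordProd (w : List (V × Bool)) :
    pushHom Γ (wordProd Γ w) (Quotient.mk (reducedSetoid Γ) ⟨[], trivial⟩) =
      Quotient.mk (reducedSetoid Γ) ⟨reduce Γ w, Reduced.reduce w⟩ := by
  induction w with
  | nil => simp; rfl
  | cons a w ih =>
    rw [wordProd_cons, map_mul, Equiv.Perm.mul_apply, ih, pushHom_letterVal]
    rfl

variable {Γ}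

theorem shuffle_reduce_of_wordProd_eq {u v : List (V × Bool)}
    (h : wordProd Γ u = wordProd Γ v) : Shuffle Γ (reduce Γ u) (reduce Γ v) := by
  have h1 := pushHom_wordProd Γ u
  rw [h, pushHom_wordProd] at h1
  exact (Quotient.exact h1).symm

/-- Solution of the word problem: two words represent the same element iff their quotient reduces
to the empty word. -/
theorem wordProd_eq_iff {u v : List (V × Bool)} :
    wordProd Γ u = wordProd Γ v ↔ reduce Γ ((u.map invLetter).reverse ++ v) = [] := by
  rw [← inv_mul_eq_one, ← wordProd_invWord, ← wordProd_append]
  constructor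
  · intro h
    have := (shuffle_reduce_of_wordProd_eq (u := _) (v := []) h).length_eq
    exact List.length_eq_zero_iff.1 this
  · intro h
    rw [← wordProd_reduce, h]
    rfl

theorem length_push_le (a : V × Bool) (w : List (V × Bool)) :
    (push Γ a w).length ≤ w.length + 1 := by
  cases h : cancel Γ a w with
  | none => simp [push_of_none h]
  | some w' =>
    rw [push_of_some h]
    have := (cancel_shuffle h).length_eq
    simp at this
    omega

theorem length_reduce_le (w : List (V × Bool)) : (reduce Γ w).length ≤ w.length := by
  induction w with
  | nil => simp [reduce]
  | cons a w ih =>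
    have := length_push_le (Γ := Γ) a (reduce Γ w)
    change (push Γ a (reduce Γ w)).length ≤ w.length + 1
    omega

/-- Reduced words are geodesic. -/
theorem Reduced.length_le {u w : List (V × Bool)} (hu : Reduced Γ u)
    (h : wordProd Γ u = wordProd Γ w) : u.length ≤ w.length := by
  have h1 := (shuffle_reduce_of_wordProd_eq h).length_eq
  rw [hu.reduce_eq] at h1
  exact h1.trans_le (length_reduce_le w)

/-! ### Star factorizations by short blocks -/

theorem cancel_sublist {a : V × Bool} {w w' : List (V × Bool)} (h : cancel Γ a w = some w') :
    w'.Sublist w := by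
  induction w generalizing w' with
  | nil => simp [cancel] at h
  | cons b w ih =>
    simp only [cancel] at h
    split_ifs at h with h1 h2
    · cases h
      exact List.sublist_cons_self _ _
    · obtain ⟨u, hu, rfl⟩ := Option.map_eq_some_iff.1 h
      exact (ih hu).cons_cons b

/-- A word that is not reduced represents the same element as one of its proper subwords. -/
theorem exists_sublist_of_not_reduced {w : List (V × Bool)} (hw : ¬ Reduced Γ w) :
    ∃ u : List (V × Bool), u.Sublist w ∧ u.length < w.length ∧ wordProd Γ u = wordProd Γ w := by
  induction w with
  | nil => exact absurd trivial hw
  | cons a w ih =>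
    cases h : cancel Γ a w with
    | none =>
      obtain ⟨u, h1, h2, h3⟩ := ih fun hr => hw ⟨h, hr⟩
      exact ⟨a :: u, h1.cons_cons a, by simpa using h2, by simp [h3]⟩
    | some w' =>
      have h1 := (cancel_shuffle h).length_eq
      have h2 := wordProd_congr (cancel_shuffle h)
      refine ⟨w', (cancel_sublist h).cons a, ?_, ?_⟩
      · simp at h1 ⊢
        omega
      · simp [h2]

omit [DecidableEq V] [DecidableRel Γ.Adj] in
/-- Subwords of a concatenation of star-blocks are again such a concatenation, with the same
number of blocks. -/
theorem exists_blocks_of_sublist (bs : List (List (V × Bool))) (hbs : ∀ b ∈ bs, IsStarBlock Γ b)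
    {u : List (V × Bool)} (hu : u.Sublist bs.flatten) :
    ∃ cs : List (List (V × Bool)), cs.length = bs.length ∧ (∀ c ∈ cs, IsStarBlock Γ c) ∧
      cs.flatten = u := by
  induction bs generalizing u with
  | nil =>
    have : u = [] := by simpa using hu
    exact ⟨[], rfl, by simp, by simp [this]⟩
  | cons b bs ih =>
    rw [List.flatten_cons, List.sublist_append_iff] at hu
    obtain ⟨u₁, u₂, rfl, h1, h2⟩ := hu
    obtain ⟨cs, hc1, hc2, rfl⟩ := ih (fun c hc => hbs c (by simp [hc])) h2
    refine ⟨u₁ :: cs, by simp [hc1], ?_, by simp⟩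
    intro c hc
    rcases List.mem_cons.1 hc with rfl | hc
    · obtain ⟨v, hv⟩ := hbs b (by simp)
      exact ⟨v, fun p hp => hv p (h1.subset hp)⟩
    · exact hc2 c hc

/-- Any star-block factorization of the element represented by `w` can be replaced by one with the
same number of blocks and total length at most that of `w`. -/
theorem exists_short_blocks (w : List (V × Bool)) (bs : List (List (V × Bool)))
    (hbs : ∀ b ∈ bs, IsStarBlock Γ b) (hw : wordProd Γ bs.flatten = wordProd Γ w) :
    ∃ cs : List (List (V × Bool)), cs.length = bs.length ∧ (∀ c ∈ cs, IsStarBlock Γ c) ∧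
      wordProd Γ cs.flatten = wordProd Γ w ∧ cs.flatten.length ≤ w.length := by
  induction hn : bs.flatten.length using Nat.strong_induction_on generalizing bs with
  | _ n ih =>
    by_cases hr : Reduced Γ bs.flatten
    · exact ⟨bs, rfl, hbs, hw, hr.length_le hw⟩
    · obtain ⟨u, h1, h2, h3⟩ := exists_sublist_of_not_reduced hr
      obtain ⟨ds, hd1, hd2, rfl⟩ := exists_blocks_of_sublist bs hbs h1
      obtain ⟨cs, hc1, hc2⟩ := ih _ (hn ▸ h2) ds hd2 (h3.trans hw) rfl
      exact ⟨cs, hc1.trans hd1, hc2⟩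

omit [DecidableEq V] [DecidableRel Γ.Adj] in
theorem letterVal_mem_starSubgroup {v : V} {p : V × Bool} (hp : p.1 ∈ vertexStar Γ v) :
    letterVal Γ p ∈ starSubgroup Γ v := by
  have : (PresentedGroup.of p.1 : RAAG Γ) ∈ starSubgroup Γ v :=
    Subgroup.subset_closure ⟨_, hp, rfl⟩
  unfold letterVal
  split_ifs
  · exact this
  · exact inv_mem this

omit [DecidableEq V] [DecidableRel Γ.Adj] in
theorem mem_starSubgroup_iff {v : V} {x : RAAG Γ} :
    x ∈ starSubgroup Γ v ↔
      ∃ b : List (V × Bool), (∀ p ∈ b, p.1 ∈ vertexStar Γ v) ∧ wordProd Γ b = x := by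
  constructor
  · intro h
    induction h using Subgroup.closure_induction with
    | mem x hx =>
      obtain ⟨u, hu, rfl⟩ := hx
      exact ⟨[(u, true)], by simpa using hu, by simp [letterVal]⟩
    | one => exact ⟨[], by simp, rfl⟩
    | mul x y _ _ hx hy =>
      obtain ⟨b, hb, rfl⟩ := hx
      obtain ⟨c, hc, rfl⟩ := hy
      refine ⟨b ++ c, fun p hp => ?_, by simp⟩
      rcases List.mem_append.1 hp with h | h
      exacts [hb p h, hc p h]
    | inv x _ hx =>
      obtain ⟨b, hb, rfl⟩ := hx
      refine ⟨(b.map invLetter).reverse, fun p hp => ?_, wordProd_invWord Γ b⟩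
      simp only [List.mem_reverse, List.mem_map] at hp
      obtain ⟨q, hq, rfl⟩ := hp
      exact hb q hq
  · rintro ⟨b, hb, rfl⟩
    induction b with
    | nil => exact one_mem _
    | cons a b ih =>
      rw [wordProd_cons]
      exact mul_mem (letterVal_mem_starSubgroup (hb a (by simp)))
        (ih fun p hp => hb p (by simp [hp]))

omit [DecidableEq V] [DecidableRel Γ.Adj] in
theorem exists_factors_iff (g : RAAG Γ) (l : ℕ) :
    (∃ factors : List (RAAG Γ), factors.length = l ∧
      (∀ x ∈ factors, ∃ v : V, x ∈ starSubgroup Γ v) ∧ factors.prod = g) ↔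
    ∃ bs : List (List (V × Bool)), bs.length = l ∧ (∀ b ∈ bs, IsStarBlock Γ b) ∧
      wordProd Γ bs.flatten = g := by
  constructor
  · rintro ⟨fs, rfl, hf, rfl⟩
    induction fs with
    | nil => exact ⟨[], rfl, by simp, rfl⟩
    | cons x fs ih =>
      obtain ⟨bs, h1, h2, h3⟩ := ih fun y hy => hf y (by simp [hy])
      obtain ⟨v, hv⟩ := hf x (by simp)
      obtain ⟨b, hb, rfl⟩ := mem_starSubgroup_iff.1 hv
      refine ⟨b :: bs, by simp [h1], ?_, by simp [h3]⟩
      intro c hc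
      rcases List.mem_cons.1 hc with rfl | hc
      exacts [⟨v, hb⟩, h2 c hc]
  · rintro ⟨bs, rfl, hb, rfl⟩
    refine ⟨bs.map (wordProd Γ), by simp, ?_, (wordProd_flatten Γ bs).symm⟩
    intro x hx
    obtain ⟨b, hb', rfl⟩ := List.mem_map.1 hx
    obtain ⟨v, hv⟩ := hb b hb'
    exact ⟨v, mem_starSubgroup_iff.2 ⟨b, hv, rfl⟩⟩

end Reduction

/-! ### Enumeration of short factorizations -/

/-- All lists of length at most `n` with entries in `L`. -/
def listsUpTo {α : Type*} (L : List α) (n : ℕ) : List (List α) :=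
  Nat.rec [[]] (fun _ acc => [] :: acc.flatMap fun t => L.map fun x => x :: t) n

theorem mem_listsUpTo {α : Type*} {L : List α} {n : ℕ} {t : List α} :
    t ∈ listsUpTo L n ↔ t.length ≤ n ∧ ∀ x ∈ t, x ∈ L := by
  induction n generalizing t with
  | zero => cases t <;> simp [listsUpTo]
  | succ n ih =>
    change t ∈ [] :: (listsUpTo L n).flatMap (fun t => L.map fun x => x :: t) ↔ _
    cases t with
    | nil => simp
    | cons a t => simp [ih]; tauto

/-- The decidable bounded search whose least solution is the star length: some list of at most `l`
star-blocks, each of length at most that of `w`, has product represented by `w`. The list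
`letters` enumerates the alphabet. -/
def HasBlocks {V : Type*} (Γ : SimpleGraph V) [DecidableEq V] [DecidableRel Γ.Adj]
    (letters : List (V × Bool)) (w : List (V × Bool)) (l : ℕ) : Prop :=
  ∃ bs ∈ listsUpTo (listsUpTo letters w.length) l,
    (∀ b ∈ bs, IsStarBlock Γ b) ∧ reduce Γ ((w.map invLetter).reverse ++ bs.flatten) = []

theorem hasBlocks_iff {V : Type*} (Γ : SimpleGraph V) [DecidableEq V] [DecidableRel Γ.Adj]
    {letters : List (V × Bool)} (hletters : ∀ p, p ∈ letters) (w : List (V × Bool)) (l : ℕ) :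
    HasBlocks Γ letters w l ↔
      ∃ k ≤ l, ∃ factors : List (RAAG Γ), factors.length = k ∧
        (∀ x ∈ factors, ∃ v : V, x ∈ starSubgroup Γ v) ∧ factors.prod = wordProd Γ w := by
  simp only [HasBlocks, mem_listsUpTo, exists_factors_iff, ← wordProd_eq_iff, hletters,
    implies_true, and_true]
  constructor
  · rintro ⟨bs, ⟨h1, -⟩, h3, h4⟩
    exact ⟨_, h1, bs, rfl, h3, h4.symm⟩
  · rintro ⟨_, hk, bs, rfl, h1, h2⟩
    obtain ⟨cs, hc1, hc2, hc3, hc4⟩ := exists_short_blocks w bs h1 h2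
    refine ⟨cs, ⟨hc1.trans_le hk, fun c hc => ?_⟩, hc2, hc3.symm⟩
    exact (List.sublist_flatten_of_mem hc).length_le.trans hc4

theorem exists_hasBlocks {V : Type*} (Γ : SimpleGraph V) [DecidableEq V] [DecidableRel Γ.Adj]
    {letters : List (V × Bool)} (hletters : ∀ p, p ∈ letters) (w : List (V × Bool)) :
    ∃ l, HasBlocks Γ letters w l := by
  refine ⟨w.length, (hasBlocks_iff Γ hletters w _).2
    ⟨_, le_rfl, w.map (letterVal Γ), by simp, ?_, rfl⟩⟩
  intro x hx
  obtain ⟨p, -, rfl⟩ := List.mem_map.1 hx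
  exact ⟨p.1, letterVal_mem_starSubgroup (Set.mem_insert _ _)⟩

theorem starLength_eq_of_least {V : Type*} (Γ : SimpleGraph V) [DecidableEq V]
    [DecidableRel Γ.Adj] {letters : List (V × Bool)} (hletters : ∀ p, p ∈ letters)
    (w : List (V × Bool)) {n : ℕ} (hn : HasBlocks Γ letters w n)
    (hmin : ∀ m < n, ¬ HasBlocks Γ letters w m) : n = starLength Γ (wordProd Γ w) := by
  obtain ⟨k, hk, hf⟩ := (hasBlocks_iff Γ hletters w n).1 hn
  apply le_antisymm
  · by_contra! hlt
    have hmem := Nat.sInf_mem (s := {l : ℕ | ∃ factors : List (RAAG Γ), factors.length = l ∧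
      (∀ x ∈ factors, ∃ v : V, x ∈ starSubgroup Γ v) ∧ factors.prod = wordProd Γ w}) ⟨k, hf⟩
    exact hmin _ hlt ((hasBlocks_iff Γ hletters w _).2 ⟨_, le_rfl, hmem⟩)
  · exact (Nat.sInf_le hf).trans hk

/-! ### Computability of the search -/

section Computability

theorem primrec_listsUpTo {α : Type*} [Primcodable α] : Primrec₂ (@listsUpTo α) := by
  refine (Primrec.nat_rec' (f := fun p : List α × ℕ => p.2) (g := fun _ => ([[]] : List (List α)))
    (h := fun p (q : ℕ × List (List α)) =>
      [] :: q.2.flatMap fun t => p.1.map fun x => x :: t) Primrec.snd (Primrec.const _) ?_)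
  refine Primrec.list_cons.comp (Primrec.const []) ?_
  refine Primrec.list_flatMap (Primrec.snd.comp Primrec.snd) ?_
  refine Primrec.list_map (Primrec.fst.comp (Primrec.fst.comp Primrec.fst)) ?_
  exact Primrec.list_cons.comp Primrec.snd (Primrec.snd.comp Primrec.fst)

variable {V : Type} [Fintype V] [DecidableEq V] [Primcodable V] (Γ : SimpleGraph V)
  [DecidableRel Γ.Adj]

theorem primrecRel_of_finite {α β : Type} [Finite α] [Finite β] [Primcodable α] [Primcodable β]
    (R : α → β → Prop) : PrimrecRel R := by
  classical
  exact ⟨Classical.decPred _, Primrec.dom_finite _⟩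

theorem primrec_cancel : Primrec₂ (cancel Γ) := by
  have key : Primrec fun p : (V × Bool) × List (V × Bool) =>
      (List.recOn p.2 none fun b l ih =>
        if b = invLetter p.1 then some l
        else if Γ.Adj p.1.1 b.1 then ih.map (b :: ·) else none :
          Option (List (V × Bool))) := by
    refine Primrec.list_rec (h := fun (p : (V × Bool) × List (V × Bool))
      (q : (V × Bool) × List (V × Bool) × Option (List (V × Bool))) =>
        if q.1 = invLetter p.1 then some q.2.1
        else if Γ.Adj p.1.1 q.1.1 then q.2.2.map (q.1 :: ·) else none)
      Primrec.snd (Primrec.const none) ?_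
    have hb : Primrec fun x : ((V × Bool) × List (V × Bool)) ×
        ((V × Bool) × List (V × Bool) × Option (List (V × Bool))) => x.2.1 :=
      Primrec.fst.comp Primrec.snd
    have ha : Primrec fun x : ((V × Bool) × List (V × Bool)) ×
        ((V × Bool) × List (V × Bool) × Option (List (V × Bool))) => x.1.1 :=
      Primrec.fst.comp Primrec.fst
    refine Primrec.ite ?_ ?_ (Primrec.ite ?_ ?_ (Primrec.const none))
    · exact (primrecRel_of_finite fun (b a : V × Bool) => b = invLetter a).comp hb ha
    · exact Primrec.option_some.comp (Primrec.fst.comp (Primrec.snd.comp Primrec.snd))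
    · exact (primrecRel_of_finite fun (a b : V × Bool) => Γ.Adj a.1 b.1).comp ha hb
    · exact Primrec.option_map (Primrec.snd.comp (Primrec.snd.comp Primrec.snd))
        (Primrec.list_cons.comp (hb.comp Primrec.fst) Primrec.snd)
  refine key.of_eq fun p => ?_
  rcases p with ⟨a, w⟩
  induction w with
  | nil => rfl
  | cons b w ih =>
    simp only [cancel] at ih ⊢
    rw [← ih]

theorem primrec_push : Primrec₂ (push Γ) :=
  Primrec.option_getD.comp (primrec_cancel Γ) (Primrec.list_cons.comp Primrec.fst Primrec.snd)

theorem primrec_reduce : Primrec (reduce Γ) :=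
  Primrec.list_foldr (h := fun _ (q : (V × Bool) × List (V × Bool)) => push Γ q.1 q.2)
    Primrec.id (Primrec.const []) ((primrec_push Γ).comp (Primrec.fst.comp Primrec.snd)
      (Primrec.snd.comp Primrec.snd))

omit [DecidableEq V] [DecidableRel Γ.Adj] in
theorem primrecPred_isStarBlock : PrimrecPred (IsStarBlock Γ) := by
  have h := (primrecRel_of_finite fun (p : V × Bool) (v : V) =>
    p.1 ∈ vertexStar Γ v).forall_mem_list
  have h' : PrimrecRel fun (v : V) (b : List (V × Bool)) => ∀ p ∈ b, p.1 ∈ vertexStar Γ v :=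
    h.comp Primrec.snd Primrec.fst
  refine (h'.exists_mem_list.comp (Primrec.const Finset.univ.toList) Primrec.id).of_eq
    fun b => ?_
  simp [IsStarBlock]

theorem primrecRel_hasBlocks (letters : List (V × Bool)) : PrimrecRel (HasBlocks Γ letters) := by
  have h : PrimrecRel fun (bs : List (List (V × Bool))) (w : List (V × Bool)) =>
      (∀ b ∈ bs, IsStarBlock Γ b) ∧
        reduce Γ ((w.map invLetter).reverse ++ bs.flatten) = [] := by
    refine ((primrecPred_isStarBlock Γ).forall_mem_list.comp Primrec.fst).and ?_
    refine Primrec.eq.comp ((primrec_reduce Γ).comp ?_) (Primrec.const [])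
    refine Primrec.list_append.comp (Primrec.list_reverse.comp ?_)
      (Primrec.list_flatten.comp Primrec.fst)
    exact Primrec.list_map Primrec.snd ((Primrec.dom_finite invLetter).comp Primrec.snd)
  refine h.exists_mem_list.comp ?_ Primrec.fst
  exact primrec_listsUpTo.comp (primrec_listsUpTo.comp (Primrec.const letters)
    (Primrec.list_length.comp Primrec.fst)) Primrec.snd

end Computability

/-- **Computability of the star length.**
Let `Γ` be a finite simplicial graph which is connected and anti-connected.  There is a total
computable function which, given a word `w` over the alphabet `V(Γ)^{±1}`, outputs the star
length `|g|_*` of the element `g` of `A_Γ` represented by `w`. -/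
theorem starLength_computable {V : Type} [Fintype V] [DecidableEq V] [Primcodable V]
    (Γ : SimpleGraph V) [DecidableRel Γ.Adj]
    (hconn : Γ.Connected) (hanti : AntiConnected Γ) :
    ∃ f : List (V × Bool) → ℕ, Computable f ∧
      ∀ w : List (V × Bool), f w = starLength Γ (wordProd Γ w) := by
  classical
  let letters : List (V × Bool) := Finset.univ.toList
  have hletters : ∀ p, p ∈ letters := by simp [letters]
  have hex := exists_hasBlocks Γ hletters
  refine ⟨fun w => Nat.find (hex w), ?_, fun w => ?_⟩
  · have hdec : Computable₂ fun w l => decide (HasBlocks Γ letters w l) :=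
      (primrecRel_hasBlocks Γ letters).decide.to_comp
    refine (Partrec.rfind hdec.partrec₂).of_eq fun w => ?_
    refine Part.eq_some_iff.2 (Nat.mem_rfind.2 ⟨?_, fun {m} hm => ?_⟩)
    · simpa using Nat.find_spec (hex w)
    · simpa using Nat.find_min (hex w) hm
  · exact starLength_eq_of_least Γ hletters w (Nat.find_spec (hex w)) fun m hm =>
      Nat.find_min (hex w) hm
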